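/- Let f : [a, b] → ℝ be a continuous piecewise quadratic function with n pieces such that at every point the left derivative of f is greater than or equal to the right derivative. Let D be the number of distinct pairs (α, β) among the leading coefficient pairs of the quadratic pieces α x² + β x + γ of f. Then the cumulative minimum g(t) = min_{s ∈ [a,t]} f(s) is a continuous piecewise quadratic function with at most n + D + 1 pieces. -/

import Mathlib

open Set

/-- `f` is piecewise quadratic on `[a,b]` with at most `k` pieces. -/
def PiecewiseQuadraticOn (f : ℝ → ℝ) (a b : ℝ) (k : ℕ) : Prop :=
  ∃ t : Fin (k + 1) → ℝ, Monotone t ∧ t 0 = a ∧ t (Fin.last k) = b ∧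
    ∀ i : Fin k, ∃ c d e : ℝ,
      ∀ x ∈ Set.Icc (t i.castSucc) (t i.succ), f x = c * x ^ 2 + d * x + e

/-!
Cut every convex quadratic piece of `f` at its vertex if the vertex lies inside the piece. Since the
pieces do not overlap, the pairs `(α, β)` of the pieces cut are distinct, so at most `n + D` parts
arise. On each part `f` is quasiconcave, so the cumulative minimum `g` is constant until `f` falls
below it, if ever, and follows `f` from there on. Thus a part holds two pieces of `g` only if it
begins with a constant one, and this piece is new only on the first part: had `g` been following
`f` downwards just before, then, for lack of a convex kink, `f` could turn upwards only at a vertex,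
and `g` would be constant on the whole part. So every part adds one piece, and the first part
possibly another.
-/

/-- The quadratic polynomial function with coefficients `A`, `B`, `C`, leading one first. -/
def quadratic (A B C x : ℝ) : ℝ :=
  A * x ^ 2 + B * x + C

namespace PiecewiseQuadraticOn

variable {g : ℝ → ℝ} {a s u : ℝ} {p q : ℕ}

theorem refl (g : ℝ → ℝ) (a : ℝ) : PiecewiseQuadraticOn g a a 0 :=
  ⟨fun _ => a, monotone_const, rfl, rfl, fun i => i.elim0⟩

theorem append (h : PiecewiseQuadraticOn g a s p) (hsu : s ≤ u) {A B C : ℝ}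
    (hq : EqOn g (quadratic A B C) (Icc s u)) : PiecewiseQuadraticOn g a u (p + 1) := by
  obtain ⟨t, ht, h0, hl, hp⟩ := h
  refine ⟨Fin.snoc (α := fun _ => ℝ) t u, ?_, ?_, Fin.snoc_last .., fun i => ?_⟩
  · simpa only [Fin.insertNth_last'] using Fin.insertNth_last_monotone ht u (hl.trans_le hsu)
  · rw [Fin.snoc_apply_zero, h0]
  · induction i using Fin.lastCases with
    | last => exact ⟨A, B, C, by simpa [EqOn, quadratic, Fin.succ_last, hl] using hq⟩
    | cast i => simpa only [← Fin.castSucc_succ, Fin.snoc_castSucc] using hp i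

theorem append_const (h : PiecewiseQuadraticOn g a s p) (hsu : s ≤ u)
    (hg : ∀ x ∈ Icc s u, g x = g s) : PiecewiseQuadraticOn g a u (p + 1) :=
  h.append (A := 0) (B := 0) (C := g s) hsu fun x hx => by simp [quadratic, hg x hx]

theorem mono (h : PiecewiseQuadraticOn g a s p) (hpq : p ≤ q) :
    PiecewiseQuadraticOn g a s q := by
  induction hpq with
  | refl => exact h
  | step _ ih => exact ih.append_const le_rfl fun x hx => by rw [le_antisymm hx.2 hx.1]

end PiecewiseQuadraticOn

theorem antitoneOn_of_quasiconcaveOn_of_le_left {𝕜 β : Type*} [Field 𝕜] [LinearOrder 𝕜]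
    [IsStrictOrderedRing 𝕜] [LinearOrder β] {f : 𝕜 → β} {l r : 𝕜}
    (hf : QuasiconcaveOn 𝕜 (Icc l r) f) (hl : ∀ x ∈ Icc l r, f x ≤ f l) :
    AntitoneOn f (Icc l r) := by
  intro x hx y hy hxy
  have hlr : l ≤ r := hx.1.trans hx.2
  exact ((hf (f y)).ordConnected.out ⟨left_mem_Icc.2 hlr, hl y hy⟩ ⟨hy, le_rfl⟩ ⟨hx.1, hxy⟩).2

theorem exists_antitoneOn_of_quasiconcaveOn_of_lt {β : Type*} [LinearOrder β] [TopologicalSpace β]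
    [OrderClosedTopology β] {f : ℝ → β} {l r w : ℝ} {m : β} (hf : QuasiconcaveOn ℝ (Icc l r) f)
    (hcont : ContinuousOn f (Icc l r)) (hl : m ≤ f l) (hw : w ∈ Icc l r) (hwm : f w < m) :
    ∃ y ∈ Ico l r, f y = m ∧ (∀ x ∈ Icc l y, m ≤ f x) ∧ AntitoneOn f (Icc y r) := by
  have hlS : l ∈ {x ∈ Icc l r | m ≤ f x} := ⟨left_mem_Icc.2 (hw.1.trans hw.2), hl⟩
  have hcompact : IsCompact {x ∈ Icc l r | m ≤ f x} :=
    isCompact_Icc.of_isClosed_subset (hcont.preimage_isClosed_of_isClosed isClosed_Icc isClosed_Ici)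
      inter_subset_left
  obtain ⟨y, hyS, hub⟩ := hcompact.exists_isGreatest ⟨l, hlS⟩
  have habove : ∀ x ∈ Icc l y, m ≤ f x := fun x hx => ((hf m).ordConnected.out hlS hyS hx).2
  have hbelow : ∀ x ∈ Ioc y r, f x < m := fun x hx =>
    not_le.1 fun hmx => (hub ⟨⟨hyS.1.1.trans hx.1.le, hx.2⟩, hmx⟩).not_gt hx.1
  have hyw : y < w := not_le.1 fun hwy => (habove w ⟨hw.1, hwy⟩).not_gt hwm
  have hfy : f y = m := by
    obtain ⟨z, hz, hfz⟩ := intermediate_value_Icc' hyw.le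
      (hcont.mono (Icc_subset_Icc hyS.1.1 hw.2)) ⟨hwm.le, hyS.2⟩
    have hzy : z ≤ y := hub ⟨⟨hyS.1.1.trans hz.1, hz.2.trans hw.2⟩, hfz.ge⟩
    rw [← hfz, le_antisymm hzy hz.1]
  refine ⟨y, ⟨hyS.1.1, hyw.trans_le hw.2⟩, hfy, habove,
    antitoneOn_of_quasiconcaveOn_of_le_left
      (Convex.quasiconcaveOn_restrict hf (Icc_subset_Icc_left hyS.1.1) (convex_Icc y r))
      fun x hx => ?_⟩
  rcases hx.1.eq_or_lt with rfl | hyx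
  · exact le_rfl
  · exact hfy ▸ (hbelow x ⟨hyx, hx.2⟩).le

theorem antitoneOn_of_concaveOn_of_hasDerivWithinAt_nonpos {f : ℝ → ℝ} {l r d : ℝ}
    (hf : ConcaveOn ℝ (Icc l r) f) (hd : HasDerivWithinAt f d (Ioi l) l) (hd0 : d ≤ 0) :
    AntitoneOn f (Icc l r) := by
  refine antitoneOn_of_quasiconcaveOn_of_le_left hf.quasiconcaveOn fun x hx => ?_
  rcases hx.1.eq_or_lt with rfl | hlx
  · exact le_rfl
  · have hslope : slope f l x ≤ d :=
      hf.slope_le_of_hasDerivWithinAt_Ioi (left_mem_Icc.2 (hx.1.trans hx.2)) hx hlx hd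
    exact (slope_nonpos_iff_of_le hx.1).1 (hslope.trans hd0)

section Quadratic

variable {f : ℝ → ℝ} {A B C l r x : ℝ} {s : Set ℝ}

theorem hasDerivAt_quadratic (A B C x : ℝ) :
    HasDerivAt (quadratic A B C) (2 * A * x + B) x := by
  refine ((((hasDerivAt_pow 2 x).const_mul A).add
    ((hasDerivAt_id' x).const_mul B)).add_const C).congr_deriv ?_
  push_cast
  ring

theorem hasDerivWithinAt_of_eqOn_quadratic (hf : EqOn f (quadratic A B C) s) (hx : x ∈ s) :
    HasDerivWithinAt f (2 * A * x + B) s x :=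
  (hasDerivAt_quadratic A B C x).hasDerivWithinAt.congr_of_mem hf hx

theorem continuousOn_of_eqOn_quadratic (hf : EqOn f (quadratic A B C) s) : ContinuousOn f s :=
  fun _ hx => (hasDerivWithinAt_of_eqOn_quadratic hf hx).continuousWithinAt

/-- The parabola `A * x ^ 2 + B * x + C` opens upwards and its vertex lies in `(l, r)`: a piece
with these coefficients on `[l, r]` has an interior local minimum. -/
def HasMinVertexIn (A B l r : ℝ) : Prop :=
  0 < A ∧ -B / (2 * A) ∈ Ioo l r

theorem quadratic_eq_vertex_form (hA : A ≠ 0) (C x : ℝ) :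
    quadratic A B C x = A * (x - -B / (2 * A)) ^ 2 + (C - B ^ 2 / (4 * A)) := by
  unfold quadratic
  field_simp
  ring

theorem concaveOn_quadratic (hA : A ≤ 0) (B C : ℝ) : ConcaveOn ℝ univ (quadratic A B C) := by
  refine ⟨convex_univ, fun x _ y _ p q hp hq hpq => ?_⟩
  obtain rfl : p = 1 - q := by linarith
  have hgap : 0 ≤ -A * ((1 - q) * q * (x - y) ^ 2) :=
    mul_nonneg (neg_nonneg.2 hA) (by positivity)
  simp only [quadratic, smul_eq_mul]
  linarith

theorem monotoneOn_quadratic (hA : 0 < A) (B C : ℝ) :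
    MonotoneOn (quadratic A B C) (Ici (-B / (2 * A))) := by
  intro x hx y _ hxy
  rw [quadratic_eq_vertex_form hA.ne', quadratic_eq_vertex_form hA.ne']
  have := sub_nonneg.2 (mem_Ici.1 hx)
  gcongr

theorem antitoneOn_quadratic (hA : 0 < A) (B C : ℝ) :
    AntitoneOn (quadratic A B C) (Iic (-B / (2 * A))) := by
  intro x _ y hy hxy
  rw [quadratic_eq_vertex_form hA.ne', quadratic_eq_vertex_form hA.ne', ← neg_sq (x - _),
    ← neg_sq (y - _)]
  have := sub_nonneg.2 (mem_Iic.1 hy)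
  gcongr
  linarith

theorem concaveOn_or_monotoneOn_or_antitoneOn_of_eqOn_quadratic
    (hf : EqOn f (quadratic A B C) (Icc l r)) (hv : ¬HasMinVertexIn A B l r) :
    ConcaveOn ℝ (Icc l r) f ∨ MonotoneOn f (Icc l r) ∨ AntitoneOn f (Icc l r) := by
  rcases le_or_gt A 0 with hA | hA
  · exact .inl
      (((concaveOn_quadratic hA B C).subset (subset_univ _) (convex_Icc l r)).congr hf.symm)
  · right
    rcases le_or_gt (-B / (2 * A)) l with hl | hl
    · exact .inl (((monotoneOn_quadratic hA B C).mono fun x hx => hl.trans hx.1).congr hf.symm)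
    · have hr : r ≤ -B / (2 * A) := not_lt.1 fun hr => hv ⟨hA, hl, hr⟩
      exact .inr (((antitoneOn_quadratic hA B C).mono fun x hx => hx.2.trans hr).congr hf.symm)

theorem quasiconcaveOn_of_eqOn_quadratic (hf : EqOn f (quadratic A B C) (Icc l r))
    (hv : ¬HasMinVertexIn A B l r) : QuasiconcaveOn ℝ (Icc l r) f := by
  rcases concaveOn_or_monotoneOn_or_antitoneOn_of_eqOn_quadratic hf hv with h | h | h
  · exact h.quasiconcaveOn
  · exact h.quasiconcaveOn (convex_Icc l r)
  · exact h.quasiconcaveOn (convex_Icc l r)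

theorem card_le_card_image_of_hasMinVertexIn {n : ℕ} {t : Fin (n + 1) → ℝ} {A B : Fin n → ℝ}
    (ht : Monotone t) {V : Finset (Fin n)}
    (hV : ∀ i ∈ V, HasMinVertexIn (A i) (B i) (t i.castSucc) (t i.succ)) :
    V.card ≤ (Finset.univ.image fun i => (A i, B i)).card := by
  refine Finset.card_le_card_of_injOn (fun i => (A i, B i))
    (fun i _ => Finset.mem_image_of_mem _ (Finset.mem_univ i)) fun i hi j hj hij => ?_
  obtain ⟨hA, hB⟩ := Prod.mk.inj hij
  have hvi : -B i / (2 * A i) ∈ Ioo (t i.castSucc) (t i.succ) := (hV i hi).2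
  have hvj : -B i / (2 * A i) ∈ Ioo (t j.castSucc) (t j.succ) := by
    rw [hA, hB]
    exact (hV j hj).2
  rw [← Fin.orderSucc_castSucc] at hvi hvj
  by_contra hne
  exact (ht.pairwise_disjoint_on_Ioo_succ (Fin.castSucc_injective n |>.ne hne)).notMem_of_mem_left
    hvi hvj

end Quadratic

/-- `g` is the cumulative minimum of `f` on `[a, b]`, the minima being attained. -/
def IsCumulativeMin {α β : Type*} [Preorder α] [Preorder β] (f g : α → β) (a b : α) : Prop :=
  ∀ u ∈ Icc a b, IsLeast (f '' Icc a u) (g u)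

namespace IsCumulativeMin

theorem of_continuousOn {α β : Type*} [Preorder α] [TopologicalSpace α] [CompactIccSpace α]
    [ConditionallyCompleteLinearOrder β] [TopologicalSpace β] [ClosedIicTopology β]
    {f : α → β} {a b : α} (hf : ContinuousOn f (Icc a b)) :
    IsCumulativeMin f (fun u => sInf (f '' Icc a u)) a b := fun _ hu =>
  (isCompact_Icc.image_of_continuousOn (hf.mono (Icc_subset_Icc_right hu.2))).isLeast_sInf
    ((nonempty_Icc.2 hu.1).image f)

variable {α β : Type*} [LinearOrder α] [PartialOrder β] {f g : α → β} {a b s u : α}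

theorem le_self (hg : IsCumulativeMin f g a b) (hu : u ∈ Icc a b) : g u ≤ f u :=
  (hg u hu).2 (mem_image_of_mem f ⟨hu.1, le_rfl⟩)

theorem eq_of_le (hg : IsCumulativeMin f g a b) (has : a ≤ s) (hsu : s ≤ u) (hub : u ≤ b)
    (h : ∀ x ∈ Icc s u, g s ≤ f x) : g u = g s := by
  have hgs := hg s ⟨has, hsu.trans hub⟩
  refine (hg u ⟨has.trans hsu, hub⟩).unique
    ⟨image_mono (Icc_subset_Icc_right hsu) hgs.1, ?_⟩
  rintro _ ⟨x, hx, rfl⟩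
  rcases le_total x s with hxs | hsx
  · exact hgs.2 (mem_image_of_mem f ⟨hx.1, hxs⟩)
  · exact h x ⟨hsx, hx.2⟩

theorem eq_self_of_antitoneOn (hg : IsCumulativeMin f g a b) (has : a ≤ s) (hsu : s ≤ u)
    (hub : u ≤ b) (hs : g s = f s) (h : AntitoneOn f (Icc s u)) : g u = f u := by
  have hu : u ∈ Icc s u := right_mem_Icc.2 hsu
  refine (hg u ⟨has.trans hsu, hub⟩).unique
    ⟨mem_image_of_mem f ⟨has.trans hsu, le_rfl⟩, ?_⟩
  rintro _ ⟨x, hx, rfl⟩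
  rcases le_total x s with hxs | hsx
  · calc f u ≤ f s := h (left_mem_Icc.2 hsu) hu hsu
      _ = g s := hs.symm
      _ ≤ f x := (hg s ⟨has, hsu.trans hub⟩).2 (mem_image_of_mem f ⟨hx.1, hxs⟩)
  · exact h ⟨hsx, hx.2⟩ hu hx.2

end IsCumulativeMin

/-- The left derivative of `f` at `x` is at least the right derivative, if both exist: `f` has no
convex kink at `x`. -/
def ConcaveKinkAt (f : ℝ → ℝ) (x : ℝ) : Prop :=
  ∀ dl dr : ℝ, HasDerivWithinAt f dl (Iio x) x → HasDerivWithinAt f dr (Ioi x) x → dr ≤ dl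

/-- `g` has at most `N` pieces on an initial part of `[a, x]` and is constant on the rest, which
may be the single point `x`. -/
def EndsFlat (g : ℝ → ℝ) (a x : ℝ) (N : ℕ) : Prop :=
  ∃ s ∈ Icc a x, PiecewiseQuadraticOn g a s N ∧ ∀ y ∈ Icc s x, g y = g s

/-- `g` has at most `N + 1` pieces on `[a, x]` and meets `f` at `x`, where `f` has a nonpositive
left derivative. -/
def EndsDescending (f g : ℝ → ℝ) (a x : ℝ) (N : ℕ) : Prop :=
  a < x ∧ PiecewiseQuadraticOn g a x (N + 1) ∧ g x = f x ∧
    ∃ d ≤ 0, HasDerivWithinAt f d (Iio x) x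

/-- The induction invariant: `g` has at most `N + 1` pieces on `[a, x]`, and if the last of them
is not constant, then `g` reaches `x` following a descent of `f`. -/
def HasPieceBudget (f g : ℝ → ℝ) (a x : ℝ) (N : ℕ) : Prop :=
  EndsFlat g a x N ∨ EndsDescending f g a x N

theorem EndsFlat.piecewiseQuadraticOn {g : ℝ → ℝ} {a x : ℝ} {N : ℕ} (h : EndsFlat g a x N) :
    PiecewiseQuadraticOn g a x (N + 1) := by
  obtain ⟨s, hs, hpq, hconst⟩ := h
  exact hpq.append_const hs.2 hconst

namespace HasPieceBudget

variable {f g : ℝ → ℝ} {a x : ℝ} {M N : ℕ}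

theorem refl (f g : ℝ → ℝ) (a : ℝ) : HasPieceBudget f g a a 0 :=
  .inl ⟨a, left_mem_Icc.2 le_rfl, .refl g a, fun y hy => by rw [le_antisymm hy.2 hy.1]⟩

theorem mono (h : HasPieceBudget f g a x M) (hMN : M ≤ N) : HasPieceBudget f g a x N := by
  rcases h with ⟨s, hs, hpq, hconst⟩ | ⟨hax, hpq, hdesc⟩
  · exact .inl ⟨s, hs, hpq.mono hMN, hconst⟩
  · exact .inr ⟨hax, hpq.mono (Nat.succ_le_succ hMN), hdesc⟩

theorem piecewiseQuadraticOn (h : HasPieceBudget f g a x N) :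
    PiecewiseQuadraticOn g a x (N + 1) :=
  h.elim EndsFlat.piecewiseQuadraticOn fun hdesc => hdesc.2.1

end HasPieceBudget

section Step

variable {f g : ℝ → ℝ} {a b l r A B C : ℝ} {N : ℕ}

theorem EndsFlat.extend (hg : IsCumulativeMin f g a b) (hlr : l ≤ r) (hrb : r ≤ b)
    (h : EndsFlat g a l N) (hge : ∀ x ∈ Icc l r, g l ≤ f x) : EndsFlat g a r N := by
  obtain ⟨s, hs, hpq, hconst⟩ := h
  refine ⟨s, ⟨hs.1, hs.2.trans hlr⟩, hpq, fun y hy => ?_⟩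
  rcases le_total y l with hyl | hly
  · exact hconst y ⟨hy.1, hyl⟩
  · rw [← hconst l ⟨hs.2, le_rfl⟩]
    exact hg.eq_of_le (hs.1.trans hs.2) hly (hy.2.trans hrb)
      fun x hx => hge x ⟨hx.1, hx.2.trans hy.2⟩

theorem EndsDescending.of_antitoneOn (hg : IsCumulativeMin f g a b) (hal : a ≤ l) (hlr : l < r)
    (hrb : r ≤ b) (hf : EqOn f (quadratic A B C) (Icc l r)) (hanti : AntitoneOn f (Icc l r))
    (hpq : PiecewiseQuadraticOn g a l N) (hgl : g l = f l) : EndsDescending f g a r N := by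
  have hgf : EqOn g f (Icc l r) := fun x hx =>
    hg.eq_self_of_antitoneOn hal hx.1 (hx.2.trans hrb) hgl
      (hanti.mono (Icc_subset_Icc_right hx.2))
  have hr : r ∈ Icc l r := right_mem_Icc.2 hlr.le
  have hderiv := hasDerivWithinAt_of_eqOn_quadratic hf hr
  have hnonpos : 2 * A * r + B ≤ 0 :=
    hderiv.derivWithin (uniqueDiffOn_Icc hlr r hr) ▸ hanti.derivWithin_nonpos
  exact ⟨hal.trans_lt hlr, hpq.append hlr.le (hgf.trans hf), hgf hr, _, hnonpos,
    hderiv.mono_of_mem_nhdsWithin (Icc_mem_nhdsLT hlr)⟩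

theorem EndsFlat.step (hg : IsCumulativeMin f g a b) (hlr : l ≤ r) (hrb : r ≤ b)
    (hf : EqOn f (quadratic A B C) (Icc l r)) (hqc : QuasiconcaveOn ℝ (Icc l r) f)
    (h : EndsFlat g a l N) : HasPieceBudget f g a r (N + 1) := by
  by_cases hge : ∀ x ∈ Icc l r, g l ≤ f x
  · exact HasPieceBudget.mono (.inl (h.extend hg hlr hrb hge)) N.le_succ
  push Not at hge
  obtain ⟨w, hw, hwlt⟩ := hge
  have hal : a ≤ l := let ⟨_, hs, _⟩ := h; hs.1.trans hs.2
  obtain ⟨y, hy, hfy, hge, hanti⟩ := exists_antitoneOn_of_quasiconcaveOn_of_lt hqc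
    (continuousOn_of_eqOn_quadratic hf) (hg.le_self ⟨hal, hlr.trans hrb⟩) hw hwlt
  have hyb : y ≤ b := hy.2.le.trans hrb
  have hgy : g y = f y := (hg.eq_of_le hal hy.1 hyb hge).trans hfy.symm
  exact .inr (.of_antitoneOn hg (hal.trans hy.1) hy.2 hrb (hf.mono (Icc_subset_Icc_left hy.1)) hanti
    (h.extend hg hy.1 hyb hge).piecewiseQuadraticOn hgy)

theorem EndsDescending.step (hg : IsCumulativeMin f g a b) (hkink : ConcaveKinkAt f l)
    (hlr : l < r) (hrb : r ≤ b) (hf : EqOn f (quadratic A B C) (Icc l r))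
    (hv : ¬HasMinVertexIn A B l r) (h : EndsDescending f g a l N) :
    HasPieceBudget f g a r (N + 1) := by
  obtain ⟨hal, hpq, hgl, dl, hdl, hleft⟩ := h
  have hl : l ∈ Icc l r := left_mem_Icc.2 hlr.le
  have hright : HasDerivWithinAt f (2 * A * l + B) (Ioi l) l :=
    (hasDerivWithinAt_of_eqOn_quadratic hf hl).mono_of_mem_nhdsWithin (Icc_mem_nhdsGT hlr)
  have follow (hanti : AntitoneOn f (Icc l r)) : HasPieceBudget f g a r (N + 1) :=
    .inr (.of_antitoneOn hg hal.le hlr hrb hf hanti hpq hgl)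
  rcases concaveOn_or_monotoneOn_or_antitoneOn_of_eqOn_quadratic hf hv with hconc | hmono | hanti
  · exact follow (antitoneOn_of_concaveOn_of_hasDerivWithinAt_nonpos hconc hright
      ((hkink _ _ hleft hright).trans hdl))
  · exact .inl ⟨l, ⟨hal.le, hlr.le⟩, hpq, fun x hx => hg.eq_of_le hal.le hx.1 (hx.2.trans hrb)
      fun y hy => hgl ▸ hmono hl ⟨hy.1, hy.2.trans hx.2⟩ hy.1⟩
  · exact follow hanti

theorem HasPieceBudget.step (hg : IsCumulativeMin f g a b)
    (hkink : ∀ x ∈ Ioo a b, ConcaveKinkAt f x) (hlr : l ≤ r) (hrb : r ≤ b)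
    (hf : EqOn f (quadratic A B C) (Icc l r)) (hv : ¬HasMinVertexIn A B l r)
    (h : HasPieceBudget f g a l N) : HasPieceBudget f g a r (N + 1) := by
  rcases hlr.eq_or_lt with rfl | hlt
  · exact h.mono N.le_succ
  rcases h with h | h
  · exact h.step hg hlr hrb hf (quasiconcaveOn_of_eqOn_quadratic hf hv)
  · exact h.step hg (hkink l ⟨h.1, hlt.trans_le hrb⟩) hlt hrb hf hv

theorem HasPieceBudget.step_of_hasMinVertexIn (hg : IsCumulativeMin f g a b)
    (hkink : ∀ x ∈ Ioo a b, ConcaveKinkAt f x) (hrb : r ≤ b)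
    (hf : EqOn f (quadratic A B C) (Icc l r)) (hv : HasMinVertexIn A B l r)
    (h : HasPieceBudget f g a l N) : HasPieceBudget f g a r (N + 2) := by
  obtain ⟨-, hlv, hvr⟩ := hv
  have hmid : HasPieceBudget f g a (-B / (2 * A)) (N + 1) :=
    h.step hg hkink hlv.le (hvr.le.trans hrb) (hf.mono (Icc_subset_Icc_right hvr.le))
      fun hv => hv.2.2.false
  exact hmid.step hg hkink hvr.le hrb (hf.mono (Icc_subset_Icc_left hlv.le)) fun hv => hv.2.1.false

end Step

theorem exists_vertices_hasPieceBudget {f g : ℝ → ℝ} {a b : ℝ} {n : ℕ} {t : Fin (n + 1) → ℝ}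
    {A B C : Fin n → ℝ} (ht : Monotone t) (ht0 : t 0 = a) (htn : t (Fin.last n) = b)
    (hf : ∀ i, EqOn f (quadratic (A i) (B i) (C i)) (Icc (t i.castSucc) (t i.succ)))
    (hg : IsCumulativeMin f g a b) (hkink : ∀ x ∈ Ioo a b, ConcaveKinkAt f x) (k : Fin (n + 1)) :
    ∃ V : Finset (Fin n),
      (∀ i ∈ V, i.castSucc < k ∧ HasMinVertexIn (A i) (B i) (t i.castSucc) (t i.succ)) ∧
      HasPieceBudget f g a (t k) (k + V.card) := by
  induction k using Fin.induction with
  | zero => exact ⟨∅, by simp, ht0 ▸ HasPieceBudget.refl f g (t 0)⟩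
  | succ k ih =>
    obtain ⟨V, hV, hbudget⟩ := ih
    have hVk : ∀ i ∈ V, i.castSucc < k.succ ∧
        HasMinVertexIn (A i) (B i) (t i.castSucc) (t i.succ) :=
      fun i hi => ⟨(hV i hi).1.trans k.castSucc_lt_succ, (hV i hi).2⟩
    have hkb : t k.succ ≤ b := htn ▸ ht (Fin.le_last _)
    by_cases hv : HasMinVertexIn (A k) (B k) (t k.castSucc) (t k.succ)
    · have hkV : k ∉ V := fun hk => (hV k hk).1.false
      refine ⟨insert k V, Finset.forall_mem_insert _ _ _ |>.2 ⟨⟨k.castSucc_lt_succ, hv⟩, hVk⟩, ?_⟩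
      refine (hbudget.step_of_hasMinVertexIn hg hkink hkb (hf k) hv).mono ?_
      rw [Finset.card_insert_of_notMem hkV, Fin.val_succ, Fin.val_castSucc]
      omega
    · refine ⟨V, hVk, ?_⟩
      refine (hbudget.step hg hkink (ht k.castSucc_le_succ) hkb (hf k) hv).mono ?_
      rw [Fin.val_succ, Fin.val_castSucc]
      omega

/-- Cumulative minimum of a continuous piecewise quadratic function with `n`
pieces, whose left derivative dominates its right derivative everywhere, and
with `D` distinct leading coefficient pairs, is piecewise quadratic with at
most `n + D + 1` pieces. -/
theorem cumulative_minimum_piece_bound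
    (a b : ℝ) (hab : a ≤ b) (f : ℝ → ℝ) (n D : ℕ)
    (t : Fin (n + 1) → ℝ) (A B C : Fin n → ℝ)
    (ht : Monotone t) (ht0 : t 0 = a) (htn : t (Fin.last n) = b)
    (hpieces : ∀ i : Fin n, ∀ x ∈ Set.Icc (t i.castSucc) (t i.succ),
      f x = A i * x ^ 2 + B i * x + C i)
    (hcont : ContinuousOn f (Set.Icc a b))
    (hD : (Finset.univ.image (fun i : Fin n => (A i, B i))).card ≤ D)
    (hderiv : ∀ x ∈ Set.Ioo a b, ∀ dl dr : ℝ,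
      HasDerivWithinAt f dl (Set.Iio x) x →
      HasDerivWithinAt f dr (Set.Ioi x) x → dr ≤ dl) :
    PiecewiseQuadraticOn (fun u => sInf (f '' Set.Icc a u)) a b (n + D + 1) := by
  obtain ⟨V, hV, hbudget⟩ := exists_vertices_hasPieceBudget ht ht0 htn hpieces
    (IsCumulativeMin.of_continuousOn hcont) hderiv (Fin.last n)
  have hVD : V.card ≤ D :=
    (card_le_card_image_of_hasMinVertexIn ht fun i hi => (hV i hi).2).trans hD
  rw [htn, Fin.val_last] at hbudget
  exact hbudget.piecewiseQuadraticOn.mono (by omega)
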